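/- Let w, w′ ∈ Sₙ, let k be a positive integer, and let p, q be positive integers with ℓ(w′) − ℓ(w) = p + q − 1 = m. Then the number of paths w = w⁽⁰⁾, w⁽¹⁾, …, w⁽ᵐ⁾ = w′ of length m in the k-Bruhat order from w to w′ whose labels satisfy w⁽¹⁾(a₁) < ⋯ < w⁽ᵖ⁾(a_p) and w⁽ᵖ⁾(a_p) > w⁽ᵖ⁺¹⁾(a_{p+1}) > ⋯ > w⁽ᵐ⁾(a_m) equals the number of such paths whose labels satisfy w⁽¹⁾(a₁) > ⋯ > w⁽q⁾(a_q) and w⁽q⁾(a_q) < ⋯ < w⁽ᵐ⁾(a_m). -/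

import Mathlib

open Equiv MvPolynomial

attribute [local instance] Classical.propDecidable

namespace SchubertPieri

/-- Position `j ∈ {1,…,N}` (1-indexed) as an element of `Fin N` (0-indexed). -/
def pos (N : ℕ) [NeZero N] (j : ℕ) : Fin N :=
  ⟨(j - 1) % N, Nat.mod_lt _ (Nat.pos_of_ne_zero (NeZero.ne N))⟩

/-- The transposition `t_{a,b}` interchanging positions `a` and `b` (1-indexed). -/
def t (N : ℕ) [NeZero N] (a b : ℕ) : Equiv.Perm (Fin N) :=
  Equiv.swap (pos N a) (pos N b)

/-- The value `w(j)` for `j ∈ {1,…,N}` (1-indexed). -/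
def val {N : ℕ} [NeZero N] (w : Equiv.Perm (Fin N)) (j : ℕ) : ℕ :=
  (w (pos N j) : ℕ) + 1

/-- The length of `w`: its number of inversions. -/
def len {N : ℕ} (w : Equiv.Perm (Fin N)) : ℕ :=
  (Finset.univ.filter fun p : Fin N × Fin N => p.1 < p.2 ∧ w p.2 < w p.1).card

/-- The longest permutation `w₀ : j ↦ N+1-j`. -/
def w0 (N : ℕ) : Equiv.Perm (Fin N) :=
  ⟨Fin.rev, Fin.rev, Fin.rev_rev, Fin.rev_rev⟩

/-- The product `t_{a 0, b 0} ⋯ t_{a (i-1), b (i-1)}`. -/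
def tProd (N : ℕ) [NeZero N] (a b : ℕ → ℕ) (i : ℕ) : Equiv.Perm (Fin N) :=
  ((List.range i).map fun j => t N (a j) (b j)).prod

/-- `r[k,m] = t_{k,k+1} t_{k,k+2} ⋯ t_{k,k+m}`, the (m+1)-cycle with
`r[k,m](k) = k+m` and `r[k,m](j) = j-1` for `k+1 ≤ j ≤ k+m`. -/
def rPerm (N k m : ℕ) [NeZero N] : Equiv.Perm (Fin N) :=
  ((List.range m).map fun i => t N k (k + 1 + i)).prod

/-- `c[k,m] = t_{k,k+1} t_{k-1,k+1} ⋯ t_{k-m+1,k+1}`, the (m+1)-cycle with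
`c[k,m](j) = j+1` for `k-m+1 ≤ j ≤ k` and `c[k,m](k+1) = k-m+1`. -/
def cPerm (N k m : ℕ) [NeZero N] : Equiv.Perm (Fin N) :=
  ((List.range m).map fun i => t N (k - i) (k + 1)).prod

/-- The conditions that `aᵢ ≤ k < bᵢ` (with all indices in `{1,…,N}`) and that
`ℓ(w t_{a₁ b₁} ⋯ t_{aᵢ bᵢ}) = ℓ(w) + i` for `1 ≤ i ≤ m`. -/
def StepOK (N k m : ℕ) [NeZero N] (w : Equiv.Perm (Fin N)) (a b : ℕ → ℕ) : Prop :=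
  (∀ i, i < m → 1 ≤ a i ∧ a i ≤ k ∧ k < b i ∧ b i ≤ N) ∧
  (∀ i, i ≤ m → len (w * tProd N a b i) = len w + i)

/-- `w →_{r[k,m]} w'`. -/
def RelR (N k m : ℕ) [NeZero N] (w w' : Equiv.Perm (Fin N)) : Prop :=
  ∃ a b : ℕ → ℕ, StepOK N k m w a b ∧ w' = w * tProd N a b m ∧
    (∀ i j, i < m → j < m → i ≠ j → b i ≠ b j)

/-- `w →_{c[k,m]} w'`. -/
def RelC (N k m : ℕ) [NeZero N] (w w' : Equiv.Perm (Fin N)) : Prop :=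
  ∃ a b : ℕ → ℕ, StepOK N k m w a b ∧ w' = w * tProd N a b m ∧
    (∀ i j, i < m → j < m → i ≠ j → a i ≠ a j)

/-- The divided difference operator `∂ᵢ f = (f - sᵢ·f)/(xᵢ - xᵢ₊₁)` (1-indexed `i`);
the quotient is exact, and is recovered here as the (unique) witness of divisibility. -/
noncomputable def divDiff {N : ℕ} [NeZero N] (i : ℕ) (f : MvPolynomial (Fin N) ℤ) :
    MvPolynomial (Fin N) ℤ :=
  if h : (X (pos N i) - X (pos N (i + 1))) ∣ (f - rename (⇑(t N i (i + 1))) f) then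
    h.choose
  else 0

/-- `∂_{a₁} ∘ ⋯ ∘ ∂_{a_p}` applied to `f`, for a word `l = [a₁,…,a_p]`. -/
noncomputable def divDiffWord {N : ℕ} [NeZero N] (l : List ℕ) (f : MvPolynomial (Fin N) ℤ) :
    MvPolynomial (Fin N) ℤ :=
  l.foldr divDiff f

/-- Auxiliary: produce a reduced word for `w` by repeatedly removing a descent. -/
def redWordAux (N : ℕ) [NeZero N] : ℕ → Equiv.Perm (Fin N) → List ℕ
  | 0, _ => []
  | fuel + 1, w =>
    match ((List.range (N - 1)).map (· + 1)).find? (fun i => decide (val w (i + 1) < val w i)) with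
    | none => []
    | some i => redWordAux N fuel (w * t N i (i + 1)) ++ [i]

/-- A canonical reduced word `(a₁,…,a_p)` for `w`, i.e. `w = s_{a₁} ⋯ s_{a_p}` with `p = ℓ(w)`. -/
def redWord (N : ℕ) [NeZero N] (w : Equiv.Perm (Fin N)) : List ℕ :=
  redWordAux N (N * N) w

/-- The staircase monomial `x₁^{N-1} x₂^{N-2} ⋯ x_{N-1}`. -/
noncomputable def staircase (N : ℕ) : MvPolynomial (Fin N) ℤ :=
  ∏ i : Fin N, X i ^ (N - 1 - (i : ℕ))

/-- The Schubert polynomial `𝔖_w = ∂_{w⁻¹w₀}(x₁^{N-1} ⋯ x_{N-1})`. -/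
noncomputable def schubertPoly (N : ℕ) [NeZero N] (w : Equiv.Perm (Fin N)) :
    MvPolynomial (Fin N) ℤ :=
  divDiffWord (redWord N (w⁻¹ * w0 N)) (staircase N)

/-- The ideal of `Rₙ` generated by the symmetric polynomials with zero constant term. -/
noncomputable def symIdeal (N : ℕ) : Ideal (MvPolynomial (Fin N) ℤ) :=
  Ideal.span {f : MvPolynomial (Fin N) ℤ | f.IsSymmetric ∧ constantCoeff f = 0}

/-- The ring `Hₙ = Rₙ/𝒮`. -/
abbrev HRing (N : ℕ) := MvPolynomial (Fin N) ℤ ⧸ symIdeal N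

/-- The class of the Schubert polynomial `𝔖_w` in `Hₙ`. -/
noncomputable def SS (N : ℕ) [NeZero N] (w : Equiv.Perm (Fin N)) : HRing N :=
  Ideal.Quotient.mk (symIdeal N) (schubertPoly N w)

/-- The complete homogeneous symmetric polynomial of degree `m` in `x₁,…,x_k`. -/
noncomputable def hPoly (N k m : ℕ) : MvPolynomial (Fin N) ℤ :=
  ∑ s ∈ (Finset.univ.filter fun i : Fin N => (i : ℕ) < k).sym m,
    (Multiset.map X (s : Multiset (Fin N))).prod

/-- The elementary symmetric polynomial of degree `m` in `x₁,…,x_k`. -/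
noncomputable def ePoly (N k m : ℕ) : MvPolynomial (Fin N) ℤ :=
  ∑ s ∈ (Finset.univ.filter fun i : Fin N => (i : ℕ) < k).powersetCard m, ∏ i ∈ s, X i

/-- Covering relation of the `k`-Bruhat order. -/
def kCover (N k : ℕ) [NeZero N] (w w' : Equiv.Perm (Fin N)) : Prop :=
  ∃ a b : ℕ, 1 ≤ a ∧ a ≤ k ∧ k < b ∧ b ≤ N ∧ w' = w * t N a b ∧ len w' = len w + 1

/-- The (strict) `k`-Bruhat order `<ₖ`. -/
def kBruhat (N k : ℕ) [NeZero N] : Equiv.Perm (Fin N) → Equiv.Perm (Fin N) → Prop :=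
  Relation.TransGen (kCover N k)

/-- The label `w⁽ⁱ⁺¹⁾(a_{i+1})` (0-indexed `i`) of the `(i+1)`-st step of a path. -/
def label {N : ℕ} [NeZero N] (w : Equiv.Perm (Fin N)) (a b : ℕ → ℕ) (i : ℕ) : ℕ :=
  val (w * tProd N a b (i + 1)) (a i)

/-- `(a,b)` encodes a path of length `m` in the `k`-Bruhat order from `w` to `w'`
(normalized so that `a i = b i = 0` for `i ≥ m`, making the encoding unique). -/
def PathWit (N k m : ℕ) [NeZero N] (w w' : Equiv.Perm (Fin N))
    (ab : (ℕ → ℕ) × (ℕ → ℕ)) : Prop :=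
  StepOK N k m w ab.1 ab.2 ∧ w' = w * tProd N ab.1 ab.2 m ∧
    ∀ i, m ≤ i → ab.1 i = 0 ∧ ab.2 i = 0

/-- Paths of length `m` in the `k`-Bruhat order from `w` to `w'` with strictly
increasing labels. -/
def IncPaths (N k m : ℕ) [NeZero N] (w w' : Equiv.Perm (Fin N)) :
    Set ((ℕ → ℕ) × (ℕ → ℕ)) :=
  {ab | PathWit N k m w w' ab ∧
    ∀ i j, i < j → j < m → label w ab.1 ab.2 i < label w ab.1 ab.2 j}

/-- Paths of length `m` in the `k`-Bruhat order from `w` to `w'` with strictly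
decreasing labels. -/
def DecPaths (N k m : ℕ) [NeZero N] (w w' : Equiv.Perm (Fin N)) :
    Set ((ℕ → ℕ) × (ℕ → ℕ)) :=
  {ab | PathWit N k m w w' ab ∧
    ∀ i j, i < j → j < m → label w ab.1 ab.2 j < label w ab.1 ab.2 i}

/-- The cycle `(x₁ x₂ … x_r)` (sending `x₁ ↦ x₂ ↦ ⋯ ↦ x_r ↦ x₁`), as a product
of transpositions. -/
def cycleList (N : ℕ) [NeZero N] (l : List ℕ) : Equiv.Perm (Fin N) :=
  ((l.zip l.tail).map fun p => t N p.1 p.2).prod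

/-- The Grassmannian permutation `h[k;p,q]` of descent `k` and hook shape `(p,1^{q-1})`:
the `(p+q)`-cycle `(k-q+1  k-q+2 … k  k+p  k+p-1 … k+1)`. -/
def hookPerm (N k p q : ℕ) [NeZero N] : Equiv.Perm (Fin N) :=
  cycleList N (((List.range q).map fun i => k - q + 1 + i) ++
    ((List.range p).reverse.map fun i => k + 1 + i))

/-- `w|ₚ ∈ S_{N-1}`: delete row `p` and column `w(p)` from the permutation matrix of `w`. -/
def drop {N : ℕ} (w : Equiv.Perm (Fin (N + 1))) (p : Fin (N + 1)) : Equiv.Perm (Fin N) :=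
  Equiv.removeNone (((finSuccEquiv' p).symm.trans (w : Fin (N + 1) ≃ Fin (N + 1))).trans
    (finSuccEquiv' (w p)))

/-- `lam` is a partition with at most `k` parts (1-indexed parts `lam 1 ≥ lam 2 ≥ ⋯`,
normalized by `lam 0 = 0`). -/
def IsPartFun (k : ℕ) (lam : ℕ → ℕ) : Prop :=
  lam 0 = 0 ∧ (∀ j, 1 ≤ j → lam (j + 1) ≤ lam j) ∧ ∀ j, k < j → lam j = 0

/-- `h_d(x₁,…,x_k)` for an integer `d`, with `h_d = 0` for `d < 0`. -/
noncomputable def hPolyZ (N k : ℕ) (d : ℤ) : MvPolynomial (Fin N) ℤ :=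
  if 0 ≤ d then hPoly N k d.toNat else 0

/-- The Schur polynomial `s_λ(x₁,…,x_k)`, via the Jacobi–Trudi determinant
`det(h_{λᵢ+j-i})_{1 ≤ i,j ≤ k}`. -/
noncomputable def schurPoly (N k : ℕ) (lam : ℕ → ℕ) : MvPolynomial (Fin N) ℤ :=
  (Matrix.of fun i j : Fin k =>
    hPolyZ N k ((lam ((i : ℕ) + 1) : ℤ) + (j : ℕ) - (i : ℕ))).det

/-- `r_j = #{i : aᵢ = j}` (with `i` ranging over `0,…,m-1`, 0-indexed). -/
def rJ (a : ℕ → ℕ) (m j : ℕ) : ℕ := ((Finset.range m).filter fun i => a i = j).card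

/-- `μ_j = r_{j+1} + ⋯ + r_k`. -/
def muJ (a : ℕ → ℕ) (m k j : ℕ) : ℕ :=
  if j = 0 then 0 else ∑ j' ∈ Finset.Icc (j + 1) k, rJ a m j'

/-- `λ_j = μ_j + r_j`. -/
def lamJ (a : ℕ → ℕ) (m k j : ℕ) : ℕ :=
  if j = 0 then 0 else muJ a m k j + rJ a m j

/-- `d_j = #{i : bᵢ = N+1-j}` (with `i` ranging over `0,…,m-1`, 0-indexed). -/
def dJ (b : ℕ → ℕ) (m N j : ℕ) : ℕ :=
  ((Finset.range m).filter fun i => b i = N + 1 - j).card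

/-- `μ′_j = d_{j+1} + ⋯ + d_{N-k}`. -/
def muJ' (b : ℕ → ℕ) (m N k j : ℕ) : ℕ :=
  if j = 0 then 0 else ∑ j' ∈ Finset.Icc (j + 1) (N - k), dJ b m N j'

/-- `λ′_j = μ′_j + d_j`. -/
def lamJ' (b : ℕ → ℕ) (m N k j : ℕ) : ℕ :=
  if j = 0 then 0 else muJ' b m N k j + dJ b m N j

/-- The conjugate (transpose) partition: `νᵗ_j = #{i : νᵢ ≥ j}`, for `ν` with at
most `k` parts. -/
def conjPart (k : ℕ) (nu : ℕ → ℕ) (j : ℕ) : ℕ :=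
  if j = 0 then 0 else ((Finset.Icc 1 k).filter fun i => j ≤ nu i).card

/-- `wv` is the Grassmannian permutation of descent `k` and shape `nu`:
`wv(j) = j + ν_{k+1-j}` for `1 ≤ j ≤ k`, and `wv` is increasing on `{k+1,…,N}`. -/
def IsGrassOf (N k : ℕ) [NeZero N] (nu : ℕ → ℕ) (wv : Equiv.Perm (Fin N)) : Prop :=
  (∀ j, 1 ≤ j → j ≤ k → val wv j = j + nu (k + 1 - j)) ∧
  (∀ j, k < j → j < N → val wv j < val wv (j + 1))

/-- Paths of length `m` in the `k`-Bruhat order from `w` to `w'` whose labels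
increase strictly for the first `p` steps and decrease strictly thereafter
(positions `p, p+1, …, m` being decreasing, 1-indexed). -/
def IncDecPaths (N k m p : ℕ) [NeZero N] (w w' : Equiv.Perm (Fin N)) :
    Set ((ℕ → ℕ) × (ℕ → ℕ)) :=
  {ab | PathWit N k m w w' ab ∧
    (∀ i j, i < j → j < p → label w ab.1 ab.2 i < label w ab.1 ab.2 j) ∧
    (∀ i j, p - 1 ≤ i → i < j → j < m → label w ab.1 ab.2 j < label w ab.1 ab.2 i)}

/-- Paths of length `m` in the `k`-Bruhat order from `w` to `w'` whose labels
decrease strictly for the first `q` steps and increase strictly thereafter. -/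
def DecIncPaths (N k m q : ℕ) [NeZero N] (w w' : Equiv.Perm (Fin N)) :
    Set ((ℕ → ℕ) × (ℕ → ℕ)) :=
  {ab | PathWit N k m w w' ab ∧
    (∀ i j, i < j → j < q → label w ab.1 ab.2 j < label w ab.1 ab.2 i) ∧
    (∀ i j, q - 1 ≤ i → i < j → j < m → label w ab.1 ab.2 i < label w ab.1 ab.2 j)}

/-!
Let `u v` be the operator of all steps of the `k`-Bruhat order with label `v`. Paths with
increasing, respectively decreasing, labels are counted by the coefficients `h p` and `e q` of the
products of the factors `1 + u v * X` in increasing, respectively decreasing, order of `v`. Since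
`u v ^ 2 = 0`, the product `h (p + 1) * e (q + 1)` counts the increasing-decreasing hooks with
corner `p` or `p + 1`, and `e (q + 1) * h (p + 1)` the decreasing-increasing ones with corner `q`
or `q + 1`. By induction on `q` it suffices that the `h p` commute with the `e q`.

Let `θ κ` be the operator of multiplication by the variable `x κ` in Monk's formula. The parts of
`θ κ` with labels at most, and less than, `v` intertwine the factors `1 + u v * X` for `k` and
`k + 1`, so that the decreasing product for `k` is the product of the factors `1 + θ κ * X` over
`κ < k`. The `θ κ` commute, as Dunkl elements for the Fomin–Kirillov relations. Hence the `e q`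
commute with one another, and therefore with the `h p`, since the increasing product is inverse to
the decreasing one at `-X`.
-/

/-! ### Length and covers -/

section Length

variable {N : ℕ} (w : Equiv.Perm (Fin N))

/-- The indicator of `{i, j}` being an inversion of `w`. Making it symmetric in `i` and `j` lets
the effect of a transposition be computed without splitting according to the order of positions.
-/
def inversionIndicator (i j : Fin N) : ℕ :=
  if i < j ∧ w j < w i ∨ j < i ∧ w i < w j then 1 else 0

lemma inversionIndicator_comm (i j : Fin N) :
    inversionIndicator w i j = inversionIndicator w j i := by
  simp only [inversionIndicator, or_comm]

lemma inversionIndicator_self (i : Fin N) : inversionIndicator w i i = 0 := by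
  simp [inversionIndicator]

lemma two_mul_len : 2 * len w = ∑ i, ∑ j, inversionIndicator w i j := by
  have split (i j : Fin N) : inversionIndicator w i j =
      (if i < j ∧ w j < w i then 1 else 0) + if j < i ∧ w i < w j then 1 else 0 := by
    unfold inversionIndicator
    grind
  have len_eq : len w = ∑ i, ∑ j, if i < j ∧ w j < w i then 1 else 0 := by
    rw [len, Finset.card_filter, Fintype.sum_prod_type]
  have len_eq' : len w = ∑ i, ∑ j, if j < i ∧ w i < w j then 1 else 0 :=
    len_eq.trans Finset.sum_comm
  simp only [split, Finset.sum_add_distrib]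
  omega

lemma sum_sum_eq_sum_compl_pair {ι : Type*} [Fintype ι] [DecidableEq ι] {s : ι → ι → ℕ}
    (symm : ∀ i j, s i j = s j i) (self : ∀ i, s i i = 0) {a b : ι} (hab : a ≠ b) :
    ∑ i, ∑ j, s i j = ∑ i ∈ {a, b}ᶜ, ∑ j ∈ {a, b}ᶜ, s i j +
      2 * (s a b + ∑ c ∈ {a, b}ᶜ, (s a c + s b c)) := by
  have split (f : ι → ℕ) : ∑ i, f i = f a + f b + ∑ i ∈ {a, b}ᶜ, f i := by
    rw [← Finset.sum_pair hab, Finset.sum_add_sum_compl]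
  rw [split, split (s a), split (s b), Finset.sum_congr rfl fun i _ => split (s i)]
  simp only [Finset.sum_add_distrib, self, symm b a, Finset.sum_congr rfl fun i _ => symm i a,
    Finset.sum_congr rfl fun i _ => symm i b]
  ring

/-- Multiplying by the transposition of a non-inversion `(a, b)` creates the inversion `(a, b)`,
and two further ones for each point strictly inside the rectangle spanned by the graph at `a` and
`b`. -/
lemma len_mul_swap {a b : Fin N} (hab : a < b) (hw : w a < w b) :
    len (w * swap a b) =
      len w + 1 + 2 * (Finset.univ.filter fun c => a < c ∧ c < b ∧ w a < w c ∧ w c < w b).card := by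
  have away {c : Fin N} (hc : c ∈ ({a, b} : Finset (Fin N))ᶜ) : (w * swap a b) c = w c := by
    simp only [Finset.mem_compl, Finset.mem_insert, Finset.mem_singleton, not_or] at hc
    rw [Perm.mul_apply, swap_apply_of_ne_of_ne hc.1 hc.2]
  have at_pair : inversionIndicator (w * swap a b) a b = inversionIndicator w a b + 1 := by
    simp [inversionIndicator, hab, hab.not_gt, hw, hw.not_gt]
  have outside : ∑ i ∈ {a, b}ᶜ, ∑ j ∈ {a, b}ᶜ, inversionIndicator (w * swap a b) i j =
      ∑ i ∈ {a, b}ᶜ, ∑ j ∈ {a, b}ᶜ, inversionIndicator w i j :=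
    Finset.sum_congr rfl fun i hi => Finset.sum_congr rfl fun j hj => by
      simp only [inversionIndicator, away hi, away hj]
  have across {c : Fin N} (hc : c ∈ ({a, b} : Finset (Fin N))ᶜ) :
      inversionIndicator (w * swap a b) a c + inversionIndicator (w * swap a b) b c =
        inversionIndicator w a c + inversionIndicator w b c +
          2 * if a < c ∧ c < b ∧ w a < w c ∧ w c < w b then 1 else 0 := by
    have hwc := away hc
    simp only [Finset.mem_compl, Finset.mem_insert, Finset.mem_singleton, not_or] at hc
    have hca := w.injective.ne hc.1
    have hcb := w.injective.ne hc.2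
    simp only [inversionIndicator, hwc, Perm.mul_apply, swap_apply_left, swap_apply_right]
    grind
  have card_inside : (Finset.univ.filter fun c => a < c ∧ c < b ∧ w a < w c ∧ w c < w b).card =
      ∑ c ∈ {a, b}ᶜ, if a < c ∧ c < b ∧ w a < w c ∧ w c < w b then 1 else 0 := by
    rw [Finset.card_filter]
    refine (Finset.sum_subset (Finset.subset_univ _) fun c _ hc => if_neg ?_).symm
    rw [Finset.mem_compl, not_not, Finset.mem_insert, Finset.mem_singleton] at hc
    rcases hc with rfl | rfl <;> simp
  have before := two_mul_len w
  have after := two_mul_len (w * swap a b)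
  rw [sum_sum_eq_sum_compl_pair (inversionIndicator_comm _) (inversionIndicator_self _) hab.ne]
    at before after
  rw [outside, at_pair, Finset.sum_congr rfl fun c => across, Finset.sum_add_distrib,
    ← Finset.mul_sum, ← card_inside] at after
  omega

/-- `IsCover w a b` says that `w * swap a b` covers `w` in the Bruhat order and that `a < b`. -/
def IsCover (a b : Fin N) : Prop :=
  a < b ∧ w a < w b ∧ ∀ c, a < c → c < b → ¬(w a < w c ∧ w c < w b)

lemma isCover_iff_len {a b : Fin N} (hab : a < b) :
    IsCover w a b ↔ len (w * swap a b) = len w + 1 := by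
  have hne : w a ≠ w b := w.injective.ne hab.ne
  rcases hne.lt_or_gt with hw | hw
  · simp [IsCover, hab, hw, len_mul_swap w hab hw, Finset.filter_eq_empty_iff]
  · have key := len_mul_swap (w * swap a b) hab (by simpa using hw)
    rw [mul_assoc, swap_mul_self, mul_one] at key
    simp only [IsCover, hw.not_gt, false_and, and_false, false_iff]
    omega

end Length

/-! ### Two consecutive covers -/

section Covers

variable {N : ℕ} {w : Equiv.Perm (Fin N)} {a b c d : Fin N}

lemma mul_swap_apply (x : Fin N) :
    (w * swap a b) x = if x = a then w b else if x = b then w a else w x := by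
  rw [Perm.mul_apply, swap_apply_def]
  split_ifs <;> rfl

lemma swap_mul_swap_of_disjoint (hac : a ≠ c) (had : a ≠ d) (hbc : b ≠ c) (hbd : b ≠ d) :
    w * swap a b * swap c d = w * swap c d * swap a b := by
  ext x
  simp only [mul_swap_apply]
  grind

lemma IsCover.swap_steps (hac : a ≠ c) (had : a ≠ d) (hbc : b ≠ c) (hbd : b ≠ d)
    (h₁ : IsCover w a b) (h₂ : IsCover (w * swap a b) c d) :
    IsCover w c d ∧ IsCover (w * swap c d) a b := by
  have inj : ∀ x y, w x = w y → x = y := fun _ _ h => w.injective h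
  simp only [IsCover, mul_swap_apply] at *
  grind

lemma isCover_left_right_iff_right_outer (hab : a < b) (hbc : b < c) (h : w b < w c) :
    IsCover w a b ∧ IsCover (w * swap a b) b c ↔ IsCover w b c ∧ IsCover (w * swap b c) a c := by
  have inj : ∀ x y, w x = w y → x = y := fun _ _ h => w.injective h
  simp only [IsCover, mul_swap_apply]
  grind

lemma isCover_left_right_iff_outer_left (hab : a < b) (hbc : b < c) (h : w c < w b) :
    IsCover w a b ∧ IsCover (w * swap a b) b c ↔ IsCover w a c ∧ IsCover (w * swap a c) a b := by
  have inj : ∀ x y, w x = w y → x = y := fun _ _ h => w.injective h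
  simp only [IsCover, mul_swap_apply]
  grind

lemma isCover_right_left_iff_left_outer (hab : a < b) (hbc : b < c) (h : w a < w b) :
    IsCover w b c ∧ IsCover (w * swap b c) a b ↔ IsCover w a b ∧ IsCover (w * swap a b) a c := by
  have inj : ∀ x y, w x = w y → x = y := fun _ _ h => w.injective h
  simp only [IsCover, mul_swap_apply]
  grind

lemma isCover_right_left_iff_outer_right (hab : a < b) (hbc : b < c) (h : w b < w a) :
    IsCover w b c ∧ IsCover (w * swap b c) a b ↔ IsCover w a c ∧ IsCover (w * swap a c) b c := by
  have inj : ∀ x y, w x = w y → x = y := fun _ _ h => w.injective h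
  simp only [IsCover, mul_swap_apply]
  grind

end Covers

/-! ### Labelled Bruhat operators -/

section Operators

variable {N : ℕ} {S T : Set (Fin N)} {a b c d v : Fin N}

/-- Matrices indexed by permutations, acting on row vectors: in a product, the leftmost factor is
the first step of a path. -/
abbrev PermMatrix (N : ℕ) : Type := Matrix (Equiv.Perm (Fin N)) (Equiv.Perm (Fin N)) ℤ

/-- The matrix of the Bruhat covers `w ⋖ w * swap a b` with `a < b` whose label, the value moved to
position `a`, lies in `S`. -/
noncomputable def bruhatOp (S : Set (Fin N)) (a b : Fin N) : PermMatrix N :=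
  Matrix.of fun w w' => if IsCover w a b ∧ w b ∈ S ∧ w' = w * swap a b then 1 else 0

lemma bruhatOp_mul_apply (M : PermMatrix N) (w w' : Equiv.Perm (Fin N)) :
    (bruhatOp S a b * M) w w' = if IsCover w a b ∧ w b ∈ S then M (w * swap a b) w' else 0 := by
  simp only [Matrix.mul_apply, bruhatOp, Matrix.of_apply, ite_mul, one_mul, zero_mul, ← and_assoc]
  by_cases h : IsCover w a b ∧ w b ∈ S <;> simp [h]

lemma bruhatOp_mul_bruhatOp_apply (w w' : Equiv.Perm (Fin N)) :
    (bruhatOp S a b * bruhatOp T c d) w w' =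
      if (IsCover w a b ∧ IsCover (w * swap a b) c d) ∧ (w b ∈ S ∧ (w * swap a b) d ∈ T) ∧
        w' = w * swap a b * swap c d then 1 else 0 := by
  rw [bruhatOp_mul_apply, bruhatOp, Matrix.of_apply]
  grind

lemma bruhatOp_eq_zero (h : ¬a < b) : bruhatOp S a b = 0 := by
  ext w w'
  simp [bruhatOp, IsCover, h]

/-- After the first step the value `v` sits at position `i`. -/
lemma bruhatOp_singleton_mul_singleton {i j : Fin N} (h : b ≠ i) :
    bruhatOp {v} i j * bruhatOp {v} a b = 0 := by
  ext w w'
  rw [bruhatOp_mul_bruhatOp_apply, if_neg, Matrix.zero_apply]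
  rintro ⟨-, ⟨hj, hb⟩, -⟩
  exact h ((w * swap i j).injective (by simpa using hb.trans hj.symm))

/-- After the first step positions `i` and `j` both carry values below `v`. -/
lemma bruhatOp_Iio_mul_singleton {i j : Fin N} (h : b = i ∨ b = j) :
    bruhatOp (Set.Iio v) i j * bruhatOp {v} a b = 0 := by
  ext w w'
  rw [bruhatOp_mul_bruhatOp_apply, if_neg, Matrix.zero_apply]
  rintro ⟨⟨⟨-, hw, -⟩, -⟩, ⟨hj, hb⟩, -⟩
  rcases h with rfl | rfl
  · simp_all
  · simp only [Perm.mul_apply, swap_apply_right, Set.mem_singleton_iff] at hb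
    exact (hb ▸ hw).not_gt hj

/-- A label below `v` cannot come from a step involving the position `a` of the value `v`. -/
lemma bruhatOp_singleton_mul_Iio (h : a = c ∨ a = d) :
    bruhatOp {v} a b * bruhatOp (Set.Iio v) c d = 0 := by
  ext w w'
  rw [bruhatOp_mul_bruhatOp_apply, if_neg, Matrix.zero_apply]
  rintro ⟨⟨-, -, hw, -⟩, ⟨hb, hd⟩, -⟩
  have ha : (w * swap a b) a = v := by simpa using hb
  rcases h with rfl | rfl
  · exact (ha ▸ hw).not_gt hd
  · exact (ha ▸ hd : v < v).false

lemma bruhatOp_union (h : Disjoint S T) :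
    bruhatOp (S ∪ T) a b = bruhatOp S a b + bruhatOp T a b := by
  have disj : ∀ x, x ∈ S → x ∉ T := fun _ hx => Set.disjoint_left.1 h hx
  ext w w'
  simp only [bruhatOp, Matrix.add_apply, Matrix.of_apply, Set.mem_union]
  grind

lemma bruhatOp_comm (hac : a ≠ c) (had : a ≠ d) (hbc : b ≠ c) (hbd : b ≠ d) :
    Commute (bruhatOp S a b) (bruhatOp T c d) := by
  ext w w'
  have covers : IsCover w a b ∧ IsCover (w * swap a b) c d ↔
      IsCover w c d ∧ IsCover (w * swap c d) a b :=
    ⟨fun h => h.1.swap_steps hac had hbc hbd h.2,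
      fun h => h.1.swap_steps hac.symm hbc.symm had.symm hbd.symm h.2⟩
  rw [bruhatOp_mul_bruhatOp_apply, bruhatOp_mul_bruhatOp_apply,
    swap_mul_swap_of_disjoint hac had hbc hbd]
  simp only [covers, mul_swap_apply, if_neg hbd, if_neg hbd.symm, if_neg hbc, if_neg had.symm,
    and_comm (a := w b ∈ S)]

/-- Of the two products on the right, only the one matching the order of `w b` and `w c` has a
nonzero row at `w`. -/
lemma bruhatOp_left_mul_right (hab : a < b) (hbc : b < c) :
    bruhatOp S a b * bruhatOp T b c =
      bruhatOp T b c * bruhatOp S a c + bruhatOp T a c * bruhatOp S a b := by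
  ext w w'
  rw [Matrix.add_apply]
  simp only [bruhatOp_mul_bruhatOp_apply]
  have e₁ : w * swap b c * swap a c = w * swap a b * swap b c := by
    ext x; simp only [mul_swap_apply]; grind
  have e₂ : w * swap a c * swap a b = w * swap a b * swap b c := by
    ext x; simp only [mul_swap_apply]; grind
  rw [e₁, e₂]
  rcases (w.injective.ne hbc.ne).lt_or_gt with h | h
  · have vanish : ¬IsCover (w * swap a c) a b := by
      simp only [IsCover, mul_swap_apply]; grind
    simp only [isCover_left_right_iff_right_outer hab hbc h, vanish, mul_swap_apply]
    grind
  · have vanish : ¬IsCover w b c := fun h' => h.not_gt h'.2.1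
    simp only [isCover_left_right_iff_outer_left hab hbc h, vanish, mul_swap_apply]
    grind

/-- On the left the same value moves twice; on the right the step with label in `T` moves a smaller
value. -/
lemma bruhatOp_right_mul_left (hST : ∀ x ∈ S, Set.Iio x ⊆ T) (hab : a < b) (hbc : b < c) :
    bruhatOp S b c * bruhatOp S a b =
      bruhatOp S a c * bruhatOp T b c + bruhatOp T a b * bruhatOp S a c := by
  ext w w'
  rw [Matrix.add_apply]
  simp only [bruhatOp_mul_bruhatOp_apply]
  have e₁ : w * swap a c * swap b c = w * swap b c * swap a b := by
    ext x; simp only [mul_swap_apply]; grind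
  have e₂ : w * swap a b * swap a c = w * swap b c * swap a b := by
    ext x; simp only [mul_swap_apply]; grind
  rw [e₁, e₂]
  have low : ∀ x y, x ∈ S → y < x → y ∈ T := fun x y hx hy => hST x hx hy
  rcases (w.injective.ne hab.ne).lt_or_gt with h | h
  · have vanish : ¬IsCover (w * swap a c) b c := by
      simp only [IsCover, mul_swap_apply]; grind
    have label_lt : IsCover (w * swap a b) a c → w b < w c := by
      simp only [IsCover, mul_swap_apply]; grind
    simp only [isCover_right_left_iff_left_outer hab hbc h, vanish, mul_swap_apply]
    grind
  · have vanish : ¬IsCover w a b := fun h' => h.not_gt h'.2.1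
    have label_lt : IsCover w a c → w a < w c := fun h' => h'.2.1
    simp only [isCover_right_left_iff_outer_right hab hbc h, vanish, mul_swap_apply]
    grind

end Operators

/-! ### Dunkl elements -/

/-- A system of elements satisfying the Fomin–Kirillov relations, except that the squares
`x i j ^ 2` are not required to vanish. -/
structure IsFominKirillov {ι A : Type*} [Ring A] (x : ι → ι → A) : Prop where
  self (i : ι) : x i i = 0
  antisymm (i j : ι) : x j i = -x i j
  commute {i j k l : ι} : i ≠ k → i ≠ l → j ≠ k → j ≠ l → Commute (x i j) (x k l)
  cyclic {i j k : ι} : i ≠ j → j ≠ k → i ≠ k → x i j * x j k + x j k * x k i + x k i * x i j = 0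

/-- The terms of the commutator with a fixed third index `l` cancel by the cyclic relation, and
those with two different ones by commutativity. -/
lemma IsFominKirillov.commute_sum {ι A : Type*} [Fintype ι] [Ring A] {x : ι → ι → A}
    (hx : IsFominKirillov x) (i j : ι) : Commute (∑ l, x i l) (∑ l, x j l) := by
  rcases eq_or_ne i j with rfl | hij
  · exact Commute.refl _
  have split (f : ι → A) : ∑ l, f l = f i + f j + ∑ l ∈ {i, j}ᶜ, f l := by
    rw [← Finset.sum_pair hij, Finset.sum_add_sum_compl]
  have not_mem {l : ι} (hl : l ∈ ({i, j} : Finset ι)ᶜ) : l ≠ i ∧ l ≠ j := by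
    simpa only [Finset.mem_compl, Finset.mem_insert, Finset.mem_singleton, not_or] using hl
  have third {l : ι} (hl : l ∈ ({i, j} : Finset ι)ᶜ) :
      (x i l * x j l - x j l * x i l) + (x i l * x j i - x j i * x i l) +
        (x i j * x j l - x j l * x i j) = 0 := by
    obtain ⟨hli, hlj⟩ := not_mem hl
    have cyclic_ij := hx.cyclic hij hlj.symm hli.symm
    have cyclic_ji := hx.cyclic hij.symm hli.symm hlj.symm
    rw [hx.antisymm i l, hx.antisymm i j] at *
    rw [hx.antisymm j l] at cyclic_ji
    linear_combination (norm := noncomm_ring) cyclic_ij - cyclic_ji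
  have double : (∑ l ∈ {i, j}ᶜ, x i l) * ∑ l ∈ {i, j}ᶜ, x j l -
      (∑ l ∈ {i, j}ᶜ, x j l) * ∑ l ∈ {i, j}ᶜ, x i l =
        ∑ l ∈ {i, j}ᶜ, (x i l * x j l - x j l * x i l) := by
    rw [Finset.sum_mul_sum, Finset.sum_mul_sum, Finset.sum_comm, ← Finset.sum_sub_distrib]
    refine Finset.sum_congr rfl fun m hm => ?_
    rw [← Finset.sum_sub_distrib]
    refine Finset.sum_eq_single_of_mem m hm fun l hl hlm => sub_eq_zero.2 ?_
    exact hx.commute hij (not_mem hm).1.symm (not_mem hl).2 hlm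
  have total := Finset.sum_eq_zero fun l => third (l := l)
  simp only [Finset.sum_add_distrib, ← double] at total
  simp only [Finset.sum_sub_distrib, ← Finset.sum_mul, ← Finset.mul_sum] at total
  rw [Commute, SemiconjBy, split (x i), split (x j), hx.self, hx.self, hx.antisymm i j] at *
  linear_combination (norm := noncomm_ring) total

/-! ### The labelled Monk operators -/

section Monk

variable {N : ℕ} {S T : Set (Fin N)} {κ v : Fin N}

lemma isFominKirillov_bruhatOp :
    IsFominKirillov fun i j : Fin N => bruhatOp Set.univ i j - bruhatOp Set.univ j i where
  self i := sub_self _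
  antisymm i j := (neg_sub _ _).symm
  commute hik hil hjk hjl :=
    ((bruhatOp_comm hik hil hjk hjl).sub_right (bruhatOp_comm hil hik hjl hjk)).sub_left
      ((bruhatOp_comm hjk hjl hik hil).sub_right (bruhatOp_comm hjl hjk hil hik))
  cyclic {i j k} hij hjk hik := by
    have left_right {a b c : Fin N} (hab : a < b) (hbc : b < c) :=
      bruhatOp_left_mul_right (S := Set.univ) (T := Set.univ) hab hbc
    have right_left {a b c : Fin N} (hab : a < b) (hbc : b < c) :=
      bruhatOp_right_mul_left (S := Set.univ) (T := Set.univ) (fun _ _ => Set.subset_univ _) hab hbc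
    have zero {a b : Fin N} (h : a < b) := bruhatOp_eq_zero (S := Set.univ) h.not_gt
    rcases hij.lt_or_gt with ij | ij <;> rcases hjk.lt_or_gt with jk | jk <;>
      rcases hik.lt_or_gt with ik | ik
    · rw [zero ij, zero jk, zero ik]
      linear_combination (norm := noncomm_ring) left_right ij jk
    · exact absurd ik (ij.trans jk).not_gt
    · rw [zero ij, zero jk, zero ik]
      linear_combination (norm := noncomm_ring) right_left ik jk
    · rw [zero ij, zero jk, zero ik]
      linear_combination (norm := noncomm_ring) left_right ik ij
    · rw [zero ij, zero jk, zero ik]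
      linear_combination (norm := noncomm_ring) right_left ij ik
    · rw [zero ij, zero jk, zero ik]
      linear_combination (norm := noncomm_ring) left_right jk ik
    · exact absurd ik (jk.trans ij).not_gt
    · rw [zero ij, zero jk, zero ik]
      linear_combination (norm := noncomm_ring) right_left jk ij

/-- The multiplication by a variable `x κ` in Monk's formula, restricted to the steps with label
in `S`; for `S = univ` it is the Dunkl element of the Fomin–Kirillov system of Bruhat operators. -/
noncomputable def monkOp (S : Set (Fin N)) (κ : Fin N) : PermMatrix N :=
  ∑ j, (bruhatOp S κ j - bruhatOp S j κ)

/-- The sum of the steps of the `k`-Bruhat order, in 0-indexed positions `a < k ≤ b`, with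
label `v`. -/
noncomputable def stepOp (k : ℕ) (v : Fin N) : PermMatrix N :=
  ∑ p : Fin N × Fin N with p.1.val < k ∧ k ≤ p.2.val, bruhatOp {v} p.1 p.2

lemma commute_monkOp_univ (i j : Fin N) :
    Commute (monkOp Set.univ i) (monkOp Set.univ j) :=
  isFominKirillov_bruhatOp.commute_sum i j

lemma monkOp_empty : monkOp ∅ κ = 0 := by
  have zero (a b : Fin N) : bruhatOp ∅ a b = 0 := by ext; simp [bruhatOp]
  simp [monkOp, zero]

lemma monkOp_union (h : Disjoint S T) : monkOp (S ∪ T) κ = monkOp S κ + monkOp T κ := by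
  simp only [monkOp, bruhatOp_union h, ← Finset.sum_add_distrib]
  exact Finset.sum_congr rfl fun j _ => by abel

lemma monkOp_eq : monkOp S κ =
    ∑ b ∈ Finset.Ioi κ, bruhatOp S κ b - ∑ a ∈ Finset.Iio κ, bruhatOp S a κ := by
  rw [monkOp, Finset.sum_sub_distrib]
  congr 1 <;> refine (Finset.sum_subset (Finset.subset_univ _) fun j _ hj => ?_).symm <;>
    exact bruhatOp_eq_zero (by simpa using hj)

lemma stepOp_zero : stepOp 0 v = 0 := by simp [stepOp]

lemma stepOp_of_le {k : ℕ} (h : N ≤ k) : stepOp k v = 0 := by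
  rw [stepOp, Finset.filter_false_of_mem, Finset.sum_empty]
  exact fun p _ hp => (p.2.isLt.trans_le h).not_ge hp.2

lemma sum_mul_sum_eq_zero {ι ι' A : Type*} [NonUnitalNonAssocSemiring A] {s : Finset ι}
    {t : Finset ι'} {f : ι → A} {g : ι' → A} (h : ∀ i ∈ s, ∀ j ∈ t, f i * g j = 0) :
    (∑ i ∈ s, f i) * ∑ j ∈ t, g j = 0 := by
  rw [Finset.sum_mul_sum]
  exact Finset.sum_eq_zero fun i hi => Finset.sum_eq_zero (h i hi)

lemma stepOp_mul_self (k : ℕ) : stepOp k v * stepOp k v = 0 :=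
  sum_mul_sum_eq_zero fun _ hp _ hq => bruhatOp_singleton_mul_singleton fun h =>
    ((Finset.mem_filter_univ _).1 hp).1.not_ge (h ▸ ((Finset.mem_filter_univ _).1 hq).2)

lemma stepOp_val : stepOp κ.val v =
    ∑ p ∈ Finset.Iio κ ×ˢ Finset.Ioi κ, bruhatOp {v} p.1 p.2 +
      ∑ a ∈ Finset.Iio κ, bruhatOp {v} a κ := by
  have pairs : (Finset.univ.filter fun p : Fin N × Fin N => p.1.val < κ.val ∧ κ.val ≤ p.2.val) =
      Finset.Iio κ ×ˢ insert κ (Finset.Ioi κ) := by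
    rw [Finset.Ioi_insert]; ext; simp
  simp only [stepOp, pairs, Finset.sum_product, Finset.sum_insert Finset.notMem_Ioi_self,
    Finset.sum_add_distrib, add_comm]

lemma stepOp_val_succ : stepOp (κ.val + 1) v =
    ∑ p ∈ Finset.Iio κ ×ˢ Finset.Ioi κ, bruhatOp {v} p.1 p.2 +
      ∑ b ∈ Finset.Ioi κ, bruhatOp {v} κ b := by
  have pairs : (Finset.univ.filter fun p : Fin N × Fin N =>
      p.1.val < κ.val + 1 ∧ κ.val + 1 ≤ p.2.val) = insert κ (Finset.Iio κ) ×ˢ Finset.Ioi κ := by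
    rw [Finset.Iio_insert]; ext; simp [Order.lt_add_one_iff]
  simp only [stepOp, pairs, Finset.sum_product, Finset.sum_insert Finset.notMem_Iio_self, add_comm]

lemma monkOp_Iic : monkOp (Set.Iic v) κ = monkOp (Set.Iio v) κ + monkOp {v} κ := by
  rw [← Set.Iio_union_right, monkOp_union (by simp)]

lemma monkOp_Iic_add_stepOp :
    monkOp (Set.Iic v) κ + stepOp κ.val v = stepOp (κ.val + 1) v + monkOp (Set.Iio v) κ := by
  rw [monkOp_Iic, monkOp_eq (S := {v}), stepOp_val, stepOp_val_succ]
  abel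

lemma bruhatOp_mul_monkOp_sub {a b : Fin N} (ha : a < κ) (hb : κ < b) :
    bruhatOp {v} a b * monkOp (Set.Iio v) κ - monkOp (Set.Iio v) κ * bruhatOp {v} a b =
      bruhatOp {v} κ b * bruhatOp {v} a κ := by
  set P := bruhatOp (Set.Iio v)
  set Q := bruhatOp {v}
  have far {j : Fin N} (hj : j ∉ ({a, b} : Finset (Fin N))) :
      Q a b * (P κ j - P j κ) - (P κ j - P j κ) * Q a b = 0 := by
    simp only [Finset.mem_insert, Finset.mem_singleton, not_or] at hj
    have comm₁ : Commute (Q a b) (P κ j) := bruhatOp_comm ha.ne (Ne.symm hj.1) hb.ne' (Ne.symm hj.2)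
    have comm₂ : Commute (Q a b) (P j κ) := bruhatOp_comm (Ne.symm hj.1) ha.ne (Ne.symm hj.2) hb.ne'
    exact sub_eq_zero.2 (comm₁.sub_right comm₂)
  have at_a : Q a b * P a κ = 0 := bruhatOp_singleton_mul_Iio (Or.inl rfl)
  have at_b : P κ b * Q a b = 0 := bruhatOp_Iio_mul_singleton (Or.inr rfl)
  have triangle : Q κ b * Q a κ = Q a b * P κ b + P a κ * Q a b :=
    bruhatOp_right_mul_left (by simp) ha hb
  have zero₁ : P κ a = 0 := bruhatOp_eq_zero ha.not_gt
  have zero₂ : P b κ = 0 := bruhatOp_eq_zero hb.not_gt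
  rw [monkOp, Finset.mul_sum, Finset.sum_mul, ← Finset.sum_sub_distrib,
    ← Finset.sum_subset (Finset.subset_univ _) fun j _ hj => far hj,
    Finset.sum_pair (ha.trans hb).ne, zero₁, zero₂, triangle]
  linear_combination (norm := noncomm_ring) -at_a - at_b

lemma monkOp_singleton_mul_stepOp : monkOp {v} κ * stepOp κ.val v =
    (∑ b ∈ Finset.Ioi κ, bruhatOp {v} κ b) * ∑ a ∈ Finset.Iio κ, bruhatOp {v} a κ := by
  have cross : (∑ b ∈ Finset.Ioi κ, bruhatOp {v} κ b) *
      ∑ p ∈ Finset.Iio κ ×ˢ Finset.Ioi κ, bruhatOp {v} p.1 p.2 = 0 :=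
    sum_mul_sum_eq_zero fun b _ p hp => bruhatOp_singleton_mul_singleton
      (Finset.mem_Ioi.1 (Finset.mem_product.1 hp).2).ne'
  have lower : (∑ a ∈ Finset.Iio κ, bruhatOp {v} a κ) * stepOp κ.val v = 0 :=
    sum_mul_sum_eq_zero fun a ha p hp => bruhatOp_singleton_mul_singleton fun h =>
      (Finset.mem_Iio.1 ha).not_ge (h ▸ ((Finset.mem_filter_univ _).1 hp).2)
  rw [monkOp_eq, sub_mul, lower, sub_zero, stepOp_val, mul_add, cross, zero_add]

lemma monkOp_Iio_mul_stepOp : monkOp (Set.Iio v) κ * stepOp κ.val v =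
    monkOp (Set.Iio v) κ * ∑ p ∈ Finset.Iio κ ×ˢ Finset.Ioi κ, bruhatOp {v} p.1 p.2 := by
  rw [stepOp_val, mul_add, add_eq_left]
  refine sum_mul_sum_eq_zero fun j _ a _ => ?_
  rw [sub_mul, bruhatOp_Iio_mul_singleton (Or.inl rfl), bruhatOp_Iio_mul_singleton (Or.inr rfl),
    sub_zero]

lemma stepOp_mul_monkOp_Iio : stepOp (κ.val + 1) v * monkOp (Set.Iio v) κ =
    (∑ p ∈ Finset.Iio κ ×ˢ Finset.Ioi κ, bruhatOp {v} p.1 p.2) * monkOp (Set.Iio v) κ := by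
  rw [stepOp_val_succ, add_mul, add_eq_left]
  refine sum_mul_sum_eq_zero fun b _ j _ => ?_
  rw [mul_sub, bruhatOp_singleton_mul_Iio (Or.inl rfl), bruhatOp_singleton_mul_Iio (Or.inr rfl),
    sub_zero]

/-- Together with `monkOp_Iic_add_stepOp`, this lets the Monk operator be moved through the factors
`1 + stepOp k v * X` of a generating function. -/
lemma monkOp_Iic_mul_stepOp :
    monkOp (Set.Iic v) κ * stepOp κ.val v = stepOp (κ.val + 1) v * monkOp (Set.Iio v) κ := by
  rw [monkOp_Iic, add_mul, monkOp_Iio_mul_stepOp, stepOp_mul_monkOp_Iio,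
    monkOp_singleton_mul_stepOp, ← eq_sub_iff_add_eq', Finset.sum_mul_sum, Finset.sum_comm,
    Finset.sum_mul, Finset.mul_sum, ← Finset.sum_sub_distrib, Finset.sum_product]
  refine Finset.sum_congr rfl fun a ha => Finset.sum_congr rfl fun b hb => ?_
  exact (bruhatOp_mul_monkOp_sub (Finset.mem_Iio.1 ha) (Finset.mem_Ioi.1 hb)).symm

end Monk

/-! ### Generating functions of monotone words -/

section GeneratingFunctions

variable {α A : Type*} [Ring A] {u : α → A}

/-- The product of the factors `1 + u i * X` over a list, in the order of the list. -/
noncomputable def genFun (u : α → A) (l : List α) : Polynomial A :=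
  (l.map fun i => 1 + Polynomial.monomial 1 (u i)).prod

lemma coeff_one_add_monomial_mul_zero (a : A) (P : Polynomial A) :
    ((1 + Polynomial.monomial 1 a) * P).coeff 0 = P.coeff 0 := by
  simp [add_mul, Polynomial.mul_coeff_zero, Polynomial.coeff_monomial]

lemma coeff_one_add_monomial_mul_succ (a : A) (P : Polynomial A) (r : ℕ) :
    ((1 + Polynomial.monomial 1 a) * P).coeff (r + 1) = P.coeff (r + 1) + a * P.coeff r := by
  rw [add_mul, one_mul, Polynomial.coeff_add, Polynomial.coeff_monomial_mul]

lemma coeff_genFun (l : List α) (r : ℕ) :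
    (genFun u l).coeff r = ((l.sublistsLen r).map fun s => (s.map u).prod).sum := by
  induction l generalizing r with
  | nil => cases r <;> simp [genFun, Polynomial.coeff_one]
  | cons i l ih =>
    rw [genFun, List.map_cons, List.prod_cons, ← genFun]
    cases r with
    | zero => rw [coeff_one_add_monomial_mul_zero, ih]; simp
    | succ r =>
      rw [coeff_one_add_monomial_mul_succ, ih, ih, List.sublistsLen_succ_cons, List.map_append,
        List.sum_append, ← List.sum_map_mul_left, List.map_map]
      simp [Function.comp_def]

lemma one_add_monomial_mul {x y a b : A} (add : x + a = b + y) (mul : x * a = b * y) :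
    (1 + Polynomial.monomial 1 x) * (1 + Polynomial.monomial 1 a) =
      (1 + Polynomial.monomial 1 b) * (1 + Polynomial.monomial 1 y) := by
  have add' := congrArg (Polynomial.monomial 1) add
  rw [map_add, map_add] at add'
  simp only [mul_add, add_mul, one_mul, mul_one, Polynomial.monomial_mul_monomial, mul]
  linear_combination (norm := noncomm_ring) add'

lemma mul_prod_map_reverse_finRange {M : Type*} [Monoid M] {n : ℕ} (x : Fin (n + 1) → M)
    {f g : Fin n → M} (h : ∀ i, x i.succ * f i = g i * x i.castSucc) :
    x (Fin.last n) * ((List.finRange n).reverse.map f).prod =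
      ((List.finRange n).reverse.map g).prod * x 0 := by
  induction n with
  | zero => simp
  | succ n ih =>
    have tail := ih (fun i => x i.succ) (f := fun i => f i.succ) (g := fun i => g i.succ)
      fun i => h i.succ
    simp only [List.finRange_succ, List.reverse_cons, ← List.map_reverse, List.map_append,
      List.map_map, List.map_singleton, List.prod_append, List.prod_singleton, Function.comp_def]
    rw [← mul_assoc, ← Fin.succ_last, tail, mul_assoc, h 0, mul_assoc]
    simp

lemma genFun_mul_genFun_neg_reverse (hu : ∀ i, u i * u i = 0) (l : List α) :
    genFun u l * genFun (-u) l.reverse = 1 := by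
  induction l with
  | nil => simp [genFun]
  | cons i l ih =>
    have cancel : (1 + Polynomial.monomial 1 (u i)) * (1 + Polynomial.monomial 1 (-u i)) = 1 := by
      rw [one_add_monomial_mul (b := 0) (y := 0)] <;> simp [hu]
    rw [genFun, genFun] at ih ⊢
    simp only [List.map_cons, List.prod_cons, List.reverse_cons, List.map_append, List.prod_append,
      List.map_nil, List.prod_nil, mul_one, Pi.neg_apply] at ih ⊢
    rw [mul_assoc, ← mul_assoc _ _ (1 + _), ih, one_mul, cancel]

lemma coeff_genFun_neg (l : List α) (r : ℕ) :
    (genFun (-u) l).coeff r = (-1) ^ r * (genFun u l).coeff r := by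
  rw [coeff_genFun, coeff_genFun, ← List.sum_map_mul_left]
  congr 1
  refine List.map_congr_left fun s hs => ?_
  rw [← (List.mem_sublistsLen.1 hs).2, ← List.length_map (f := u), ← List.prod_map_neg,
    List.map_map]
  rfl

lemma commute_coeff_genFun_reverse (hu : ∀ i, u i * u i = 0) {a : A} {l : List α}
    (h : ∀ r, Commute a ((genFun u l).coeff r)) (r : ℕ) :
    Commute a ((genFun u l.reverse).coeff r) := by
  have commute_iff (P : Polynomial A) :
      Commute (Polynomial.C a) P ↔ ∀ r, Commute a (P.coeff r) := by
    simp only [Commute, SemiconjBy, Polynomial.ext_iff, Polynomial.coeff_C_mul,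
      Polynomial.coeff_mul_C]
  have hu_neg (i : α) : (-u) i * (-u) i = 0 := by simpa using hu i
  let unit : (Polynomial A)ˣ :=
    ⟨genFun (-u) l, genFun u l.reverse,
      by simpa using genFun_mul_genFun_neg_reverse hu_neg l,
      by simpa using genFun_mul_genFun_neg_reverse hu l.reverse⟩
  refine (commute_iff _).1 (Commute.units_inv_right (u := unit) ((commute_iff _).2 fun s => ?_)) r
  change Commute a ((genFun (-u) l).coeff s)
  rw [coeff_genFun_neg]
  exact ((Commute.neg_one_right a).pow_right s).mul_right (h s)

end GeneratingFunctions

section Commutation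

variable {N : ℕ}

lemma genFun_stepOp_succ (κ : Fin N) :
    genFun (stepOp (κ.val + 1)) (List.finRange N).reverse =
      (1 + Polynomial.monomial 1 (monkOp Set.univ κ)) *
        genFun (stepOp κ.val) (List.finRange N).reverse := by
  have low_succ (v : Fin N) : {x : Fin N | x.castSucc < v.succ} = Set.Iic v := by
    ext; simp
  have low_castSucc (v : Fin N) : {x : Fin N | x.castSucc < v.castSucc} = Set.Iio v := by
    ext; simp
  have intertwine := mul_prod_map_reverse_finRange
    (fun i : Fin (N + 1) =>
      (1 + Polynomial.monomial 1 (monkOp {x | x.castSucc < i} κ) : Polynomial (PermMatrix N)))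
    (f := fun v => 1 + Polynomial.monomial 1 (stepOp κ.val v))
    (g := fun v => 1 + Polynomial.monomial 1 (stepOp (κ.val + 1) v)) fun v => by
      rw [low_succ, low_castSucc]
      exact one_add_monomial_mul monkOp_Iic_add_stepOp monkOp_Iic_mul_stepOp
  simpa [Fin.castSucc_lt_last, monkOp_empty, genFun] using intertwine.symm

lemma genFun_stepOp_of_eq_zero {k : ℕ} (h : ∀ v : Fin N, stepOp k v = 0) (l : List (Fin N)) :
    genFun (stepOp k) l = 1 := by
  simp [genFun, h]

lemma commute_coeff_genFun_of_commute_monkOp {M : PermMatrix N}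
    (hM : ∀ κ, Commute M (monkOp Set.univ κ)) (k r : ℕ) :
    Commute M ((genFun (stepOp k) (List.finRange N).reverse).coeff r) := by
  have commute_one (r : ℕ) : Commute M ((1 : Polynomial (PermMatrix N)).coeff r) := by
    rw [Polynomial.coeff_one]
    split_ifs <;> simp
  induction k generalizing r with
  | zero => simpa only [genFun_stepOp_of_eq_zero fun _ => stepOp_zero] using commute_one r
  | succ k ih =>
    rcases lt_or_ge k N with hk | hk
    · rw [genFun_stepOp_succ ⟨k, hk⟩]
      cases r with
      | zero => simpa only [coeff_one_add_monomial_mul_zero] using ih 0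
      | succ r =>
        rw [coeff_one_add_monomial_mul_succ]
        exact (ih _).add_right ((hM _).mul_right (ih r))
    · simpa only [genFun_stepOp_of_eq_zero fun _ => stepOp_of_le (hk.trans k.le_succ)]
        using commute_one r

lemma commute_coeff_genFun_stepOp (k r s : ℕ) :
    Commute ((genFun (stepOp k) (List.finRange N)).coeff r)
      ((genFun (stepOp k) (List.finRange N).reverse).coeff s) := by
  have decreasing (r s : ℕ) :
      Commute ((genFun (stepOp k) (List.finRange N).reverse).coeff r)
        ((genFun (stepOp k) (List.finRange N).reverse).coeff s) :=
    commute_coeff_genFun_of_commute_monkOp (fun κ => Commute.symm <|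
      commute_coeff_genFun_of_commute_monkOp (commute_monkOp_univ κ) k r) k s
  have increasing := commute_coeff_genFun_reverse (fun _ => stepOp_mul_self k)
    (decreasing s) r
  rw [List.reverse_reverse] at increasing
  exact increasing.symm

end Commutation

/-! ### Hook words -/

section Hooks

variable {α : Type*} {R : α → α → Prop}

/-- The word `L` is `R`-monotone up to the index `p`, and monotone for the opposite relation from
there on. -/
def IsHook (R : α → α → Prop) (p : ℕ) (L : List α) : Prop :=
  (L.take (p + 1)).Pairwise R ∧ (L.drop p).Pairwise (Function.swap R)

lemma isHook_length_append_cons_cons [IsTrans α R] (L₁ L₂ : List α) (x y : α) :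
    IsHook R L₁.length (L₁ ++ x :: y :: L₂) ↔
      ((L₁ ++ [x]).Pairwise R ∧ (y :: L₂).Pairwise (Function.swap R)) ∧ R y x := by
  simp only [IsHook, List.take_length_add_append, List.drop_left, ← List.isChain_iff_pairwise]
  simp [Function.swap, and_comm, and_left_comm]

lemma isHook_length_succ_append_cons_cons [IsTrans α R] (L₁ L₂ : List α) (x y : α) :
    IsHook R (L₁.length + 1) (L₁ ++ x :: y :: L₂) ↔
      ((L₁ ++ [x]).Pairwise R ∧ (y :: L₂).Pairwise (Function.swap R)) ∧ R x y := by
  simp only [IsHook, add_assoc, List.take_length_add_append, List.drop_length_add_append,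
    ← List.isChain_iff_pairwise]
  simp [and_assoc, and_comm]

lemma isHook_iff_isHook_swap_zero {L : List α} {p : ℕ} (hL : L.length = p + 1) :
    IsHook R p L ↔ IsHook (Function.swap R) 0 L := by
  have take_all : L.take (p + 1) = L := List.take_of_length_le hL.le
  obtain ⟨x, hx⟩ := List.length_eq_one_iff.1 (show (L.drop p).length = 1 by simp [hL])
  obtain ⟨y, hy⟩ := List.length_eq_one_iff.1 (show (L.take 1).length = 1 by simp [hL])
  simp [IsHook, take_all, hx, hy, Function.swap]

lemma isHook_map_range {m p : ℕ} (hp : p < m) (f : ℕ → α) :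
    IsHook R p ((List.range m).map f) ↔ (∀ i j, i < j → j < p + 1 → R (f i) (f j)) ∧
      ∀ i j, p ≤ i → i < j → j < m → R (f j) (f i) := by
  simp only [IsHook, List.pairwise_iff_getElem, List.length_take, List.length_drop,
    List.length_map, List.length_range, List.getElem_take, List.getElem_drop, List.getElem_map,
    List.getElem_range]
  refine and_congr ⟨fun h i j hij hj => h i j (by omega) (by omega) hij,
    fun h i j _ hj hij => h i j hij (by omega)⟩ ⟨fun h i j hi hij hj => ?_,
    fun h i j _ hj hij => h _ _ (by omega) (by omega) (by omega)⟩
  have shifted := h (i - p) (j - p) (by omega) (by omega) (by omega)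
  rwa [Nat.add_sub_cancel' hi, Nat.add_sub_cancel' (hi.trans hij.le)] at shifted

end Hooks

section Words

variable {α A : Type*} [Finite α] [Ring A] {u : α → A} {R : α → α → Prop}

/-- The finite set of words of length `m` satisfying `P`. -/
noncomputable def words (m : ℕ) (P : List α → Prop) : Finset (List α) :=
  ((List.finite_length_eq α m).inter_of_left {L | P L}).toFinset

lemma mem_words {m : ℕ} {P : List α → Prop} {L : List α} : L ∈ words m P ↔ L.length = m ∧ P L :=
  Set.Finite.mem_toFinset _

/-- The sum over the words of length `m` satisfying `P` of the products of their letters, evaluated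
through `u`. -/
noncomputable def wordSum (u : α → A) (m : ℕ) (P : List α → Prop) : A :=
  ∑ L ∈ words m P, (L.map u).prod

lemma wordSum_eq_sum_ite (m : ℕ) (P : List α → Prop) :
    wordSum u m P = ∑ L ∈ words m fun _ => True, if P L then (L.map u).prod else 0 := by
  rw [wordSum, ← Finset.sum_filter]
  congr 1
  ext L
  simp [mem_words]

lemma wordSum_zero (P : List α → Prop) : wordSum u 0 P = if P [] then 1 else 0 := by
  have words_zero : words 0 (fun _ : List α => True) = {[]} := by
    ext L
    simp [mem_words]
  rw [wordSum_eq_sum_ite, words_zero, Finset.sum_singleton, List.map_nil, List.prod_nil]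

lemma wordSum_succ {β : Type*} [Fintype β] {u : β → A} (m : ℕ) (P : List β → Prop) :
    wordSum u (m + 1) P = ∑ v, u v * wordSum u m fun L => P (v :: L) := by
  simp only [wordSum, Finset.mul_sum]
  rw [Finset.sum_sigma']
  refine (Finset.sum_nbij (fun L => L.1 :: L.2) ?_ ?_ ?_ ?_).symm
  · simp [mem_words]
  · rintro ⟨v, L⟩ - ⟨v', L'⟩ - h
    simpa using h
  · rintro (_ | ⟨v, L⟩) h
    · simp [mem_words] at h
    · exact ⟨⟨v, L⟩, by simpa [mem_words] using h⟩
  · simp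

lemma coeff_genFun_eq_wordSum [Std.Asymm R] {l : List α} (hl : l.Pairwise R) (mem : ∀ i, i ∈ l)
    (r : ℕ) : (genFun u l).coeff r = wordSum u r (List.Pairwise R) := by
  have nodup {s : List α} (hs : s.Pairwise R) : s.Nodup := hs.imp fun h e => by
    subst e; exact irrefl _ h
  have sublists_eq : (l.sublistsLen r).toFinset = words r (List.Pairwise R) := by
    ext s
    rw [List.mem_toFinset, List.mem_sublistsLen, mem_words]
    exact ⟨fun h => ⟨h.2, hl.sublist h.1⟩, fun h => ⟨List.sublist_of_subperm_of_pairwise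
      ((nodup h.2).subperm fun i _ => mem i) h.2 hl, h.1⟩⟩
  rw [coeff_genFun, wordSum, ← sublists_eq,
    List.sum_toFinset _ (List.nodup_sublistsLen _ (nodup hl))]

lemma wordSum_mul_wordSum (a b : ℕ) (P Q : List α → Prop) :
    wordSum u a P * wordSum u b Q =
      wordSum u (a + b) fun L => P (L.take a) ∧ Q (L.drop a) := by
  rw [wordSum, wordSum, wordSum, Finset.sum_mul_sum, ← Finset.sum_product']
  refine Finset.sum_nbij' (fun L => L.1 ++ L.2) (fun L => (L.take a, L.drop a)) ?_ ?_ ?_ ?_ ?_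
  · rintro ⟨L₁, L₂⟩ h
    simp only [Finset.mem_product, mem_words] at h
    obtain ⟨⟨rfl, hP⟩, rfl, hQ⟩ := h
    simp [mem_words, hP, hQ]
  · intro L h
    rw [mem_words] at h
    simp [mem_words, h]
  · rintro ⟨L₁, L₂⟩ h
    simp only [Finset.mem_product, mem_words] at h
    simp [← h.1.1]
  · exact fun L _ => L.take_append_drop a
  · simp

/-- The corner of the hook is the last letter of the first word or the first letter of the second
one; when these agree, the product vanishes. -/
lemma wordSum_pairwise_mul_wordSum_pairwise [IsStrictTotalOrder α R] (hu : ∀ i, u i * u i = 0)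
    (p q : ℕ) :
    wordSum u (p + 1) (List.Pairwise R) * wordSum u (q + 1) (List.Pairwise (Function.swap R)) =
      wordSum u (p + q + 2) (IsHook R (p + 1)) + wordSum u (p + q + 2) (IsHook R p) := by
  rw [wordSum_mul_wordSum, show p + 1 + (q + 1) = p + q + 2 by omega]
  simp only [wordSum_eq_sum_ite, ← Finset.sum_add_distrib]
  refine Finset.sum_congr rfl fun L hL => ?_
  replace hL : L.length = p + q + 2 := (mem_words.1 hL).1
  obtain ⟨L₁, x, y, L₂, rfl, rfl⟩ : ∃ L₁ x y L₂, L₁.length = p ∧ L = L₁ ++ x :: y :: L₂ :=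
    ⟨L.take p, L[p], L[p + 1], L.drop (p + 2), by simp; omega, by simp⟩
  have halves : (L₁ ++ x :: y :: L₂).take (L₁.length + 1) = L₁ ++ [x] ∧
      (L₁ ++ x :: y :: L₂).drop (L₁.length + 1) = y :: L₂ := by
    simp [List.take_length_add_append, List.drop_length_add_append]
  rw [halves.1, halves.2]
  simp only [isHook_length_append_cons_cons, isHook_length_succ_append_cons_cons]
  rcases trichotomous_of R x y with h | rfl | h
  · simp [h, asymm h]
  · simp [irrefl_of R x, ← mul_assoc (u x), hu]
  · simp [h, asymm h]

lemma wordSum_isHook_swap [IsStrictTotalOrder α R] (hu : ∀ i, u i * u i = 0)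
    (comm : ∀ r s, Commute (wordSum u r (List.Pairwise R))
      (wordSum u s (List.Pairwise (Function.swap R)))) (p q : ℕ) :
    wordSum u (p + q + 1) (IsHook R p) =
      wordSum u (p + q + 1) (IsHook (Function.swap R) q) := by
  induction q generalizing p with
  | zero =>
    refine Finset.sum_congr ?_ fun _ _ => rfl
    ext L
    rw [mem_words, mem_words]
    exact and_congr_right isHook_iff_isHook_swap_zero
  | succ q ih =>
    have product := wordSum_pairwise_mul_wordSum_pairwise (R := R) hu p q
    have product' := wordSum_pairwise_mul_wordSum_pairwise (R := Function.swap R) hu q p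
    have corner := ih (p + 1)
    rw [comm] at product
    rw [add_comm q p] at product'
    rw [show p + 1 + q + 1 = p + q + 2 by omega] at corner
    have sums := product.symm.trans product'
    rw [corner, add_comm] at sums
    exact add_right_cancel sums

lemma commute_wordSum_stepOp {N : ℕ} (k r s : ℕ) :
    Commute (wordSum (stepOp (N := N) k) r (List.Pairwise (· < ·)))
      (wordSum (stepOp k) s (List.Pairwise (Function.swap (· < ·)))) := by
  rw [← coeff_genFun_eq_wordSum (List.pairwise_lt_finRange N) List.mem_finRange,
    ← coeff_genFun_eq_wordSum (List.pairwise_reverse.2 (List.pairwise_lt_finRange N))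
      (by simp)]
  exact commute_coeff_genFun_stepOp k r s

end Words

/-! ### Counting paths -/

section Paths

variable {N : ℕ} {k m : ℕ} {w w' : Equiv.Perm (Fin N)}

/-- The sequence `f` with `x` prepended. -/
def consSeq (x : ℕ) (f : ℕ → ℕ) : ℕ → ℕ
  | 0 => x
  | i + 1 => f i

lemma consSeq_injective2 : Function.Injective2 consSeq :=
  fun _ _ _ _ h => ⟨congrFun h 0, funext fun i => congrFun h (i + 1)⟩

/-- The encoding of a path whose first step is at the (0-indexed) positions `p` and whose further
steps are encoded by `ab`. -/
def consStep (p : Fin N × Fin N) (ab : (ℕ → ℕ) × (ℕ → ℕ)) : (ℕ → ℕ) × (ℕ → ℕ) :=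
  (consSeq (p.1.val + 1) ab.1, consSeq (p.2.val + 1) ab.2)

lemma consStep_injective2 : Function.Injective2 (consStep (N := N)) := fun _ _ _ _ h => by
  obtain ⟨h₁, h₂⟩ := Prod.ext_iff.1 h
  obtain ⟨ha, hf⟩ := consSeq_injective2 h₁
  obtain ⟨hb, hg⟩ := consSeq_injective2 h₂
  exact ⟨Prod.ext (Fin.ext (Nat.succ_injective ha)) (Fin.ext (Nat.succ_injective hb)),
    Prod.ext hf hg⟩

/-- The (0-indexed) positions of the steps of the `k`-Bruhat order starting at `w`. -/
noncomputable def steps (k : ℕ) (w : Equiv.Perm (Fin N)) : Finset (Fin N × Fin N) :=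
  {p | (p.1.val < k ∧ k ≤ p.2.val) ∧ IsCover w p.1 p.2}

lemma stepOp_mul_apply (v : Fin N) (M : PermMatrix N) :
    (stepOp k v * M) w w' = ∑ p ∈ steps k w with w p.2 = v, M (w * swap p.1 p.2) w' := by
  rw [stepOp, Finset.sum_mul, Matrix.sum_apply, steps, Finset.filter_filter]
  simp only [bruhatOp_mul_apply, Set.mem_singleton_iff]
  rw [← Finset.sum_filter, Finset.filter_filter]
  simp only [and_assoc]

/-- The paths of length `m` in the `k`-Bruhat order from `w` to `w'` whose label word satisfies
`P`, in the encoding of `PathWit`. -/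
noncomputable def pathFinset (k : ℕ) : ℕ → (List (Fin N) → Prop) → Equiv.Perm (Fin N) →
    Equiv.Perm (Fin N) → Finset ((ℕ → ℕ) × (ℕ → ℕ))
  | 0, P, w, w' => if w' = w ∧ P [] then {0} else ∅
  | m + 1, P, w, w' => (steps k w).biUnion fun p =>
      (pathFinset k m (fun L => P (w p.2 :: L)) (w * swap p.1 p.2) w').map
        ⟨consStep p, consStep_injective2.right p⟩

lemma card_pathFinset (P : List (Fin N) → Prop) :
    ((pathFinset k m P w w').card : ℤ) = wordSum (stepOp k) m P w w' := by
  induction m generalizing w P with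
  | zero =>
    rw [pathFinset, wordSum_zero]
    by_cases hP : P [] <;> by_cases hw : w' = w <;> simp [hP, hw, Matrix.one_apply, eq_comm]
  | succ m ih =>
    rw [pathFinset, Finset.card_biUnion, wordSum_succ, Matrix.sum_apply]
    · simp only [stepOp_mul_apply, ← ih, Finset.card_map, Nat.cast_sum]
      rw [← Finset.sum_fiberwise (steps k w) fun p => w p.2]
      refine Finset.sum_congr rfl fun v _ => Finset.sum_congr rfl fun p hp => ?_
      rw [(Finset.mem_filter.1 hp).2]
    · intro p _ p' _ hne
      simp only [Function.onFun, Finset.disjoint_left, Finset.mem_map]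
      rintro _ ⟨cd, -, rfl⟩ ⟨cd', -, h⟩
      exact hne (consStep_injective2 h).1.symm

variable [NeZero N]

lemma pos_val_add_one (a : Fin N) : pos N (a.val + 1) = a := by
  ext
  simp [pos, Nat.mod_eq_of_lt a.isLt]

lemma tProd_consStep (p : Fin N × Fin N) (ab : (ℕ → ℕ) × (ℕ → ℕ)) (i : ℕ) :
    tProd N (consStep p ab).1 (consStep p ab).2 (i + 1) =
      swap p.1 p.2 * tProd N ab.1 ab.2 i := by
  simp [tProd, List.range_succ_eq_map, consStep, consSeq, t, pos_val_add_one, Function.comp_def]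

/-- The (0-indexed) label of the `i`-th step. -/
def letter (w : Equiv.Perm (Fin N)) (ab : (ℕ → ℕ) × (ℕ → ℕ)) (i : ℕ) : Fin N :=
  (w * tProd N ab.1 ab.2 (i + 1)) (pos N (ab.1 i))

lemma label_lt_label {ab : (ℕ → ℕ) × (ℕ → ℕ)} {i j : ℕ} :
    label w ab.1 ab.2 i < label w ab.1 ab.2 j ↔ letter w ab i < letter w ab j :=
  Nat.succ_lt_succ_iff

lemma map_letter_consStep (p : Fin N × Fin N) (ab : (ℕ → ℕ) × (ℕ → ℕ)) :
    (List.range (m + 1)).map (letter w (consStep p ab)) =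
      w p.2 :: (List.range m).map (letter (w * swap p.1 p.2) ab) := by
  rw [List.range_succ_eq_map, List.map_cons, List.map_map]
  congr 1
  · simp [letter, consStep, consSeq, pos_val_add_one, tProd, t]
  · refine List.map_congr_left fun i _ => ?_
    simp only [Function.comp_apply, letter, Nat.succ_eq_add_one, tProd_consStep, mul_assoc]
    rfl

lemma pathWit_zero {ab : (ℕ → ℕ) × (ℕ → ℕ)} : PathWit N k 0 w w' ab ↔ w' = w ∧ ab = 0 := by
  simp [PathWit, StepOK, tProd, Prod.ext_iff, funext_iff, forall_and]

lemma stepOK_consStep {p : Fin N × Fin N} {ab : (ℕ → ℕ) × (ℕ → ℕ)} :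
    StepOK N k (m + 1) w (consStep p ab).1 (consStep p ab).2 ↔
      p ∈ steps k w ∧ StepOK N k m (w * swap p.1 p.2) ab.1 ab.2 := by
  have positions_iff : 1 ≤ p.1.val + 1 ∧ p.1.val + 1 ≤ k ∧ k < p.2.val + 1 ∧ p.2.val + 1 ≤ N ↔
      p.1.val < k ∧ k ≤ p.2.val := by
    have := p.2.isLt
    omega
  have lengths_iff : (∀ i, i ≤ m + 1 →
      len (w * tProd N (consStep p ab).1 (consStep p ab).2 i) = len w + i) ↔
      len (w * swap p.1 p.2) = len w + 1 ∧
        ∀ i, i ≤ m → len (w * swap p.1 p.2 * tProd N ab.1 ab.2 i) =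
          len (w * swap p.1 p.2) + i := by
    constructor
    · intro h
      have shifted (i : ℕ) (hi : i ≤ m) :
          len (w * swap p.1 p.2 * tProd N ab.1 ab.2 i) = len w + (i + 1) := by
        rw [mul_assoc, ← tProd_consStep]
        exact h (i + 1) (by omega)
      have first : len (w * swap p.1 p.2) = len w + 1 := by
        simpa [tProd] using shifted 0 m.zero_le
      exact ⟨first, fun i hi => by rw [shifted i hi, first]; omega⟩
    · rintro ⟨first, h⟩ (_ | i) hi
      · simp [tProd]
      · rw [tProd_consStep, ← mul_assoc, h i (by omega), first]
        omega
  rw [StepOK, StepOK, lengths_iff, Nat.forall_lt_succ_left]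
  simp only [consStep, consSeq, positions_iff, steps, Finset.mem_filter_univ]
  constructor
  · rintro ⟨⟨hp, later⟩, first, lengths⟩
    have hlt : p.1 < p.2 := hp.1.trans_le hp.2
    exact ⟨⟨hp, (isCover_iff_len w hlt).2 first⟩, later, lengths⟩
  · rintro ⟨⟨hp, cover⟩, later, lengths⟩
    exact ⟨⟨hp, later⟩, (isCover_iff_len w cover.1).1 cover, lengths⟩

lemma pathWit_consStep {p : Fin N × Fin N} {ab : (ℕ → ℕ) × (ℕ → ℕ)} :
    PathWit N k (m + 1) w w' (consStep p ab) ↔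
      p ∈ steps k w ∧ PathWit N k m (w * swap p.1 p.2) w' ab := by
  have tail_iff : (∀ i, m + 1 ≤ i → (consStep p ab).1 i = 0 ∧ (consStep p ab).2 i = 0) ↔
      ∀ i, m ≤ i → ab.1 i = 0 ∧ ab.2 i = 0 :=
    ⟨fun h i hi => h (i + 1) (Nat.succ_le_succ hi), fun h => by
      rintro (_ | i) hi
      · omega
      · exact h i (Nat.le_of_succ_le_succ hi)⟩
  rw [PathWit, PathWit, stepOK_consStep, tProd_consStep, tail_iff, and_assoc, mul_assoc]

lemma exists_eq_consStep {ab : (ℕ → ℕ) × (ℕ → ℕ)} (h : PathWit N k (m + 1) w w' ab) :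
    ∃ (p : Fin N × Fin N) (cd : (ℕ → ℕ) × (ℕ → ℕ)), ab = consStep p cd := by
  obtain ⟨ha, hak, hkb, hb⟩ := h.1.1 0 m.succ_pos
  refine ⟨(⟨ab.1 0 - 1, by omega⟩, ⟨ab.2 0 - 1, by omega⟩),
    (fun i => ab.1 (i + 1), fun i => ab.2 (i + 1)), Prod.ext ?_ ?_⟩ <;>
  · ext (_ | i)
    · simp only [consStep, consSeq]
      omega
    · rfl

lemma mem_pathFinset {P : List (Fin N) → Prop} {ab : (ℕ → ℕ) × (ℕ → ℕ)} :
    ab ∈ pathFinset k m P w w' ↔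
      PathWit N k m w w' ab ∧ P ((List.range m).map (letter w ab)) := by
  induction m generalizing w P ab with
  | zero =>
    rw [pathFinset, pathWit_zero]
    split_ifs <;> simp_all
  | succ m ih =>
    have cons_iff (p : Fin N × Fin N) (cd : (ℕ → ℕ) × (ℕ → ℕ)) :
        (p ∈ steps k w ∧ cd ∈ pathFinset k m (fun L => P (w p.2 :: L)) (w * swap p.1 p.2) w') ↔
          PathWit N k (m + 1) w w' (consStep p cd) ∧
            P ((List.range (m + 1)).map (letter w (consStep p cd))) := by
      rw [ih, pathWit_consStep, map_letter_consStep, and_assoc]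
    simp only [pathFinset, Finset.mem_biUnion, Finset.mem_map, Function.Embedding.coeFn_mk]
    constructor
    · rintro ⟨p, hp, cd, hcd, rfl⟩
      exact (cons_iff p cd).1 ⟨hp, hcd⟩
    · intro h
      obtain ⟨p, cd, rfl⟩ := exists_eq_consStep h.1
      obtain ⟨hp, hcd⟩ := (cons_iff p cd).2 h
      exact ⟨p, hp, cd, hcd, rfl⟩

lemma coe_pathFinset_isHook_lt {p : ℕ} (hp : p < m) :
    (pathFinset k m (IsHook (· < ·) p) w w' : Set ((ℕ → ℕ) × (ℕ → ℕ))) =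
      IncDecPaths N k m (p + 1) w w' := by
  ext ab
  simp only [Finset.mem_coe, mem_pathFinset, isHook_map_range hp, ← label_lt_label]
  rfl

lemma coe_pathFinset_isHook_gt {q : ℕ} (hq : q < m) :
    (pathFinset k m (IsHook (Function.swap (· < ·)) q) w w' : Set ((ℕ → ℕ) × (ℕ → ℕ))) =
      DecIncPaths N k m (q + 1) w w' := by
  ext ab
  simp only [Finset.mem_coe, mem_pathFinset, isHook_map_range hq, Function.swap, ← label_lt_label]
  rfl

end Paths

/-- If `ℓ(w') - ℓ(w) = p + q - 1 = m`, the number of paths of length `m` in the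
`k`-Bruhat order from `w` to `w'` whose labels increase for the first `p` steps and
then decrease equals the number of such paths whose labels decrease for the
first `q` steps and then increase (paths being encoded by their normalized
sequences of transpositions; here the paper's `n` is `n+1`). -/
theorem hook_path_count_symmetry (n k p q : ℕ) (hk : 1 ≤ k) (hp : 1 ≤ p) (hq : 1 ≤ q)
    (w w' : Equiv.Perm (Fin (n + 1)))
    (hlen : len w' = len w + (p + q - 1)) :
    (IncDecPaths (n + 1) k (p + q - 1) p w w').ncard =
      (DecIncPaths (n + 1) k (p + q - 1) q w w').ncard := by
  obtain ⟨p, rfl⟩ : ∃ p', p = p' + 1 := ⟨p - 1, by omega⟩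
  obtain ⟨q, rfl⟩ : ∃ q', q = q' + 1 := ⟨q - 1, by omega⟩
  rw [show p + 1 + (q + 1) - 1 = p + q + 1 by omega, ← coe_pathFinset_isHook_lt (by omega),
    ← coe_pathFinset_isHook_gt (by omega), Set.ncard_coe_finset, Set.ncard_coe_finset,
    ← Nat.cast_inj (R := ℤ), card_pathFinset, card_pathFinset,
    wordSum_isHook_swap (fun _ => stepOp_mul_self k) (commute_wordSum_stepOp k)]

end SchubertPieri
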